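/- Conditional version of the cutoff-rate inequality for pure-state channels: let A and X be finite sets, and for each a ∈ A let x ↦ S_{a,x} = |ψ_{a,x}⟩⟨ψ_{a,x}| be a pure-state classical-quantum channel on H = ℂ^d. Let P be a probability distribution on A and, for each a, let V(·|a) be a probability distribution on X. Define E_0^cc(ρ,P,V) = Σ_{a∈A} P(a) E_0^cc(C_a, ρ, V(·|a)) and R_∞(P,V) = Σ_{a∈A} P(a) R_∞(C_a, V(·|a)). Then sup_{ρ ≥ 0} [E_0^cc(ρ,P,V) − ρ R_∞(P,V)] ≤ R_∞(P,V); that is, the conditional sphere packing exponent evaluated at rate R_∞(P,V) is at most R_∞(P,V). -/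

import Mathlib

open scoped BigOperators ComplexOrder
noncomputable section

namespace SPB

/-- `-log t` with the convention that it is `+∞` for `t ≤ 0`. -/
def negLog (t : ℝ) : EReal := if t ≤ 0 then (⊤ : EReal) else ((-Real.log t : ℝ) : EReal)

/-- Power of a positive semidefinite (more generally Hermitian) matrix by functional calculus
on the eigenvalues, with the convention `0 ^ r = 0` (so `A ^ 0` is the projection onto the
range of `A`). -/
def mpow {ι : Type*} [Fintype ι] [DecidableEq ι] (A : Matrix ι ι ℂ) (r : ℝ) :
    Matrix ι ι ℂ :=
  if hA : A.IsHermitian then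
    (hA.eigenvectorUnitary : Matrix ι ι ℂ) *
      Matrix.diagonal (fun i => ((if hA.eigenvalues i = 0 then (0 : ℝ)
        else hA.eigenvalues i ^ r : ℝ) : ℂ)) *
      (star (hA.eigenvectorUnitary : Matrix ι ι ℂ))
  else 0

/-- A density operator: positive semidefinite with trace one. -/
def IsDensity {ι : Type*} [Fintype ι] [DecidableEq ι] (A : Matrix ι ι ℂ) : Prop :=
  A.PosSemidef ∧ A.trace = 1

/-- A probability distribution on a finite alphabet. -/
def IsProbDist {X : Type*} [Fintype X] (P : X → ℝ) : Prop :=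
  (∀ x, 0 ≤ P x) ∧ ∑ x, P x = 1

/-- The constant–composition sphere packing coefficient
`E₀^cc(ρ,P) = min_F -(1+ρ) ∑ₓ P(x) log Tr(Sₓ^{1/(1+ρ)} F^{ρ/(1+ρ)})`. -/
def E0cc {X : Type*} [Fintype X] {d : ℕ} (S : X → Matrix (Fin d) (Fin d) ℂ)
    (ρ : ℝ) (P : X → ℝ) : EReal :=
  ⨅ F : {F : Matrix (Fin d) (Fin d) ℂ // IsDensity F},
    ((1 + ρ : ℝ) : EReal) *
      ∑ x, ((P x : ℝ) : EReal) *
        negLog ((Matrix.trace (mpow (S x) (1 / (1 + ρ)) * mpow F.1 (ρ / (1 + ρ)))).re)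
/-- The pure state (rank-one projection) `|ψ⟩⟨ψ|` associated with a vector `ψ ∈ ℂ^d`. -/
def pureState {d : ℕ} (ψ : Fin d → ℂ) : Matrix (Fin d) (Fin d) ℂ :=
  Matrix.of fun i j => ψ i * (starRingEnd ℂ) (ψ j)

/-- The cutoff rate `R_∞(P) = min_F -∑ₓ P(x) log Tr(Sₓ F)` (for pure-state channels). -/
def RinfPure {X : Type*} [Fintype X] {d : ℕ} (S : X → Matrix (Fin d) (Fin d) ℂ)
    (P : X → ℝ) : EReal :=
  ⨅ F : {F : Matrix (Fin d) (Fin d) ℂ // IsDensity F},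
    ∑ x, ((P x : ℝ) : EReal) * negLog ((Matrix.trace (S x * F.1)).re)

/-!
Every matrix `0 ≤ B ≤ 1` satisfies `B ≤ B ^ r` for `r ≤ 1`, since `t ≤ t ^ r` on `[0, 1]`. Density
operators are of this kind, and `(A, B) ↦ Tr (A B)` is monotone on positive semidefinite matrices,
so `Tr (Sₓ F) ≤ Tr (Sₓ ^ (1/(1+ρ)) F ^ (ρ/(1+ρ)))` for each `F`. Taking `-log`, averaging and
minimizing over the same `F` on both sides gives `E₀^cc(ρ, Q) ≤ (1 + ρ) R_∞(Q)`. Averaging over `a`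
and subtracting `ρ R_∞` leaves `R_∞`.
-/

section

open scoped MatrixOrder

section Matrix

variable {𝕜 ι : Type*} [RCLike 𝕜] [Fintype ι]

lemma trace_mul_nonneg {A B : Matrix ι ι 𝕜} (hA : 0 ≤ A) (hB : 0 ≤ B) :
    0 ≤ (A * B).trace := by
  classical
  obtain ⟨C, rfl⟩ := CStarAlgebra.nonneg_iff_eq_star_mul_self.mp hA
  rw [mul_assoc, Matrix.trace_mul_comm]
  exact ((Matrix.nonneg_iff_posSemidef.mp hB).mul_mul_conjTranspose_same C).trace_nonneg

lemma trace_mul_le_trace_mul {A A' B B' : Matrix ι ι 𝕜} (hAA' : A ≤ A') (hBB' : B ≤ B')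
    (hA' : 0 ≤ A') (hB : 0 ≤ B) : (A * B).trace ≤ (A' * B').trace := by
  have hleft : 0 ≤ ((A' - A) * B).trace := trace_mul_nonneg (sub_nonneg.mpr hAA') hB
  have hright : 0 ≤ (A' * (B' - B)).trace := trace_mul_nonneg hA' (sub_nonneg.mpr hBB')
  rw [sub_mul, Matrix.trace_sub, sub_nonneg] at hleft
  rw [mul_sub, Matrix.trace_sub, sub_nonneg] at hright
  exact hleft.trans hright

end Matrix

section FunctionalCalculus

variable {ι : Type*} [Fintype ι] [DecidableEq ι] {A : Matrix ι ι ℂ}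

lemma mpow_eq_cfc (hA : A.IsHermitian) (r : ℝ) :
    mpow A r = cfc (fun t : ℝ => if t = 0 then 0 else t ^ r) A := by
  rw [hA.cfc_eq, Matrix.IsHermitian.cfc, Unitary.conjStarAlgAut_apply, mpow, dif_pos hA]
  rfl

lemma le_mpow (hA₀ : 0 ≤ A) (hA₁ : A ≤ 1) {r : ℝ} (hr : r ≤ 1) : A ≤ mpow A r := by
  have hA : IsSelfAdjoint A := .of_nonneg hA₀
  have hcont (f : ℝ → ℝ) : ContinuousOn f (spectrum ℝ A) := A.finite_real_spectrum.continuousOn f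
  calc
    A = cfc (fun t : ℝ => t) A := (cfc_id' ℝ A).symm
    _ ≤ cfc (fun t : ℝ => if t = 0 then 0 else t ^ r) A := by
      refine cfc_mono (fun t ht => ?_) (hcont _) (hcont _)
      have ht₀ : 0 ≤ t := spectrum_nonneg_of_nonneg hA₀ ht
      have ht₁ : t ≤ 1 := (CFC.le_one_iff (R := ℝ) A).mp hA₁ t ht
      split_ifs with h
      · exact h.le
      · exact Real.self_le_rpow_of_le_one ht₀ ht₁ hr
    _ = mpow A r := (mpow_eq_cfc hA r).symm

lemma IsDensity.nonneg (hA : IsDensity A) : 0 ≤ A := hA.1.nonneg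

lemma IsDensity.le_one (hA : IsDensity A) : A ≤ 1 := by
  have hherm : A.IsHermitian := hA.1.isHermitian
  have hsum : ∑ i, hherm.eigenvalues i = 1 := by
    simpa using congrArg Complex.re (hherm.trace_eq_sum_eigenvalues.symm.trans hA.2)
  refine CFC.le_one (R := ℝ) fun t ht => ?_
  obtain ⟨i, rfl⟩ := hherm.spectrum_real_eq_range_eigenvalues ▸ ht
  exact hsum ▸ Finset.single_le_sum (fun j _ => hA.1.eigenvalues_nonneg j) (Finset.mem_univ i)

lemma isDensity_pureState {d : ℕ} {ψ : Fin d → ℂ} (hψ : ∑ i, Complex.normSq (ψ i) = 1) :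
    IsDensity (pureState ψ) := by
  have hvec : pureState ψ = Matrix.vecMulVec ψ (star ψ) := rfl
  refine ⟨hvec ▸ Matrix.posSemidef_vecMulVec_self_star ψ, ?_⟩
  simp only [Matrix.trace, Matrix.diag_apply, pureState, Matrix.of_apply, Complex.mul_conj]
  exact_mod_cast hψ

end FunctionalCalculus

section ExtendedReal

lemma negLog_antitone : Antitone negLog := by
  intro s t hst
  unfold negLog
  split_ifs with ht hs hs
  · exact le_rfl
  · exact absurd (hst.trans ht) hs
  · exact le_top
  · exact_mod_cast neg_le_neg (Real.log_le_log (not_le.mp hs) hst)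

lemma ereal_coe_mul_sum {ι : Type*} {c : ℝ} (hc : 0 ≤ c) (s : Finset ι) (f : ι → EReal) :
    (c : EReal) * ∑ i ∈ s, f i = ∑ i ∈ s, (c : EReal) * f i :=
  let mulLeft : EReal →+ EReal :=
    { toFun := ((c : EReal) * ·)
      map_zero' := mul_zero _
      map_add' := EReal.left_distrib_of_nonneg_of_ne_top (EReal.coe_nonneg.mpr hc)
        (EReal.coe_ne_top c) }
  map_sum mulLeft f s

lemma ereal_coe_mul_iInf {ι : Sort*} {c : ℝ} (hc : 0 < c) (f : ι → EReal) :
    (c : EReal) * ⨅ i, f i = ⨅ i, (c : EReal) * f i := by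
  have hc' : (0 : EReal) < c := EReal.coe_pos.mpr hc
  apply le_antisymm
  · exact le_iInf fun i => mul_le_mul_of_nonneg_left (iInf_le f i) hc'.le
  · rw [← EReal.div_le_iff_le_mul hc' (EReal.coe_ne_top c)]
    refine le_iInf fun i => ?_
    rw [EReal.div_le_iff_le_mul hc' (EReal.coe_ne_top c)]
    exact iInf_le _ i

end ExtendedReal

section Channel

variable {X : Type*} [Fintype X] {d : ℕ}

lemma negLog_trace_mpow_mul_mpow_le {ι : Type*} [Fintype ι] [DecidableEq ι]
    {S F : Matrix ι ι ℂ} (hS : S ∈ Set.Icc 0 1) (hF : F ∈ Set.Icc 0 1) {r s : ℝ}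
    (hr : r ≤ 1) (hs : s ≤ 1) :
    negLog (mpow S r * mpow F s).trace.re ≤ negLog (S * F).trace.re := by
  have hSr : S ≤ mpow S r := le_mpow hS.1 hS.2 hr
  have hFs : F ≤ mpow F s := le_mpow hF.1 hF.2 hs
  exact negLog_antitone
    (Complex.le_def.mp (trace_mul_le_trace_mul hSr hFs (hS.1.trans hSr) hF.1)).1

lemma E0cc_le_mul_RinfPure {S : X → Matrix (Fin d) (Fin d) ℂ} (hS : ∀ x, S x ∈ Set.Icc 0 1)
    {Q : X → ℝ} (hQ : ∀ x, 0 ≤ Q x) {ρ : ℝ} (hρ : 0 ≤ ρ) :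
    E0cc S ρ Q ≤ ((1 + ρ : ℝ) : EReal) * RinfPure S Q := by
  have hpos : 0 < 1 + ρ := by linarith
  have hS_exp : 1 / (1 + ρ) ≤ 1 := (div_le_one hpos).mpr (by linarith)
  have hF_exp : ρ / (1 + ρ) ≤ 1 := (div_le_one hpos).mpr (by linarith)
  rw [RinfPure, ereal_coe_mul_iInf hpos]
  refine iInf_mono fun F => ?_
  gcongr with x
  · exact EReal.coe_nonneg.mpr (hQ x)
  · exact negLog_trace_mpow_mul_mpow_le (hS x) ⟨F.2.nonneg, F.2.le_one⟩ hS_exp hF_exp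

theorem conditional_Espcc_at_Rinf_le_Rinf_general {A : Type*} [Fintype A]
    {S : A → X → Matrix (Fin d) (Fin d) ℂ} (hS : ∀ a x, S a x ∈ Set.Icc 0 1)
    {P : A → ℝ} (hP : ∀ a, 0 ≤ P a) {V : A → X → ℝ} (hV : ∀ a x, 0 ≤ V a x) :
    (⨆ ρ : {ρ : ℝ // 0 ≤ ρ}, (∑ a, (P a : EReal) * E0cc (S a) ρ.1 (V a)) -
      (ρ.1 : EReal) * ∑ a, (P a : EReal) * RinfPure (S a) (V a)) ≤
      ∑ a, (P a : EReal) * RinfPure (S a) (V a) := by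
  refine iSup_le fun ⟨ρ, hρ⟩ => EReal.sub_le_of_le_add ?_
  calc
    ∑ a, (P a : EReal) * E0cc (S a) ρ (V a)
    _ ≤ ∑ a, (P a : EReal) * (((1 + ρ : ℝ) : EReal) * RinfPure (S a) (V a)) := by
      gcongr with a
      · exact EReal.coe_nonneg.mpr (hP a)
      · exact E0cc_le_mul_RinfPure (hS a) (hV a) hρ
    _ = ((1 + ρ : ℝ) : EReal) * ∑ a, (P a : EReal) * RinfPure (S a) (V a) := by
      simp only [ereal_coe_mul_sum (add_nonneg zero_le_one hρ), mul_left_comm]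
    _ = (∑ a, (P a : EReal) * RinfPure (S a) (V a)) +
        (ρ : EReal) * ∑ a, (P a : EReal) * RinfPure (S a) (V a) := by
      rw [EReal.coe_add, EReal.coe_one,
        EReal.right_distrib_of_nonneg zero_le_one (EReal.coe_nonneg.mpr hρ), one_mul]

end Channel

end

/-- **Conditional version of the cutoff-rate inequality for pure-state channels**: with
`E₀^cc(ρ,P,V) = ∑ₐ P(a) E₀^cc(Cₐ,ρ,V(·|a))` and `R_∞(P,V) = ∑ₐ P(a) R_∞(Cₐ,V(·|a))`, we have
`sup_{ρ ≥ 0} [E₀^cc(ρ,P,V) - ρ R_∞(P,V)] ≤ R_∞(P,V)`. -/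
theorem conditional_Espcc_at_Rinf_le_Rinf
    {A X : Type*} [Fintype A] [DecidableEq A] [Fintype X] [DecidableEq X] {d : ℕ}
    (ψ : A → X → Fin d → ℂ) (hψ : ∀ a x, ∑ i, Complex.normSq (ψ a x i) = 1)
    (P : A → ℝ) (hP : IsProbDist P)
    (V : A → X → ℝ) (hV : ∀ a, IsProbDist (V a)) :
    (⨆ ρ : {ρ : ℝ // 0 ≤ ρ},
      (∑ a, ((P a : ℝ) : EReal) * E0cc (fun x => pureState (ψ a x)) ρ.1 (V a)) -
        ((ρ.1 : ℝ) : EReal) *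
          ∑ a, ((P a : ℝ) : EReal) * RinfPure (fun x => pureState (ψ a x)) (V a)) ≤
      ∑ a, ((P a : ℝ) : EReal) * RinfPure (fun x => pureState (ψ a x)) (V a) := by
  exact conditional_Espcc_at_Rinf_le_Rinf_general
    (fun a x => ⟨(isDensity_pureState (hψ a x)).nonneg, (isDensity_pureState (hψ a x)).le_one⟩)
    hP.1 fun a => (hV a).1

end SPB
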